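/- Let 0 < θ < 1, let p₀, p₁ be globally log-Hölder continuous exponents with 1 ≤ p₀⁻ ≤ p₀⁺ < ∞ and 1 ≤ p₁⁻ ≤ p₁⁺ < ∞, and let α₀, α₁ : ℝ^n → ℝ be locally log-Hölder continuous. Define 1/p(·) := (1−θ)/p₀(·) + θ/p₁(·) and α(·) := (1−θ)α₀(·) + θα₁(·). Then the Calderón product (f^{α₀(·)}_{p₀(·),p₀(·)})^{1−θ} · (f^{α₁(·)}_{p₁(·),p₁(·)})^{θ} equals f^{α(·)}_{p(·),p(·)} with equivalent norms. -/

import Mathlib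

open MeasureTheory ENNReal Real Set

noncomputable section

/-- Euclidean space ℝ^n. -/
abbrev En (n : ℕ) := EuclideanSpace ℝ (Fin n)

/-- `g` is locally log-Hölder continuous with constant `c`. -/
def LocLogHolder {n : ℕ} (c : ℝ) (g : En n → ℝ) : Prop :=
  0 < c ∧ ∀ x y : En n, |g x - g y| ≤ c / Real.log (Real.exp 1 + 1 / ‖x - y‖)

/-- `g` is globally log-Hölder continuous with local constant `c`. -/
def GlobLogHolder {n : ℕ} (c : ℝ) (g : En n → ℝ) : Prop :=
  LocLogHolder c g ∧
    ∃ (gi cd : ℝ), 0 < cd ∧ ∀ x : En n, |g x - gi| ≤ cd / Real.log (Real.exp 1 + ‖x‖)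

/-- The kernel η_{v,h}(x) = 2^{nv} (1 + 2^v |x|)^{-h}. -/
def eta (n : ℕ) (v : ℕ) (h : ℝ) (x : En n) : ℝ :=
  (2 : ℝ) ^ (n * v) * (1 + (2 : ℝ) ^ v * ‖x‖) ^ (-h)

/-- The dyadic cube Q_{v,m}. -/
def dyadicCube (n : ℕ) (v : ℤ) (m : Fin n → ℤ) : Set (En n) :=
  {x | ∀ i, (m i : ℝ) ≤ (2 : ℝ) ^ v * x i ∧ (2 : ℝ) ^ v * x i < m i + 1}

/-- Luxemburg (quasi-)norm of an ℝ≥0∞-valued function with variable exponent `p`. -/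
def luxNorm {n : ℕ} (p : En n → ℝ) (F : En n → ℝ≥0∞) : ℝ≥0∞ :=
  sInf {c : ℝ≥0∞ | 0 < c ∧ ∫⁻ x, (F x / c) ^ p x ≤ 1}

/-- The mixed Lebesgue-sequence space norm ‖(F_v)_v‖_{L^{p(·)}(ℓ_{q(·)})}. -/
def mixedNorm {n : ℕ} (p q : En n → ℝ) (F : ℕ → En n → ℝ≥0∞) : ℝ≥0∞ :=
  luxNorm p fun x => (∑' v : ℕ, F v x ^ q x) ^ (1 / q x)

/-- The sequence space norm ‖λ‖_{f^{α(·)}_{p(·),q(·)}}. -/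
def seqNorm {n : ℕ} (α p q : En n → ℝ) (lam : ℕ → (Fin n → ℤ) → ℂ) : ℝ≥0∞ :=
  mixedNorm p q fun v x =>
    ∑' m : Fin n → ℤ,
      ENNReal.ofReal ((2 : ℝ) ^ ((v : ℝ) * (α x + n / 2)) * ‖lam v m‖) *
        (dyadicCube n (v : ℤ) m).indicator (fun _ => (1 : ℝ≥0∞)) x

/-- The sequence space norm ‖λ‖_{f^{α(·)}_{∞,q}}. -/
def seqNormInf {n : ℕ} (α : En n → ℝ) (q : ℝ) (lam : ℕ → (Fin n → ℤ) → ℂ) : ℝ≥0∞ :=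
  ⨆ (vQ : ℤ) (mQ : Fin n → ℤ),
    volume (dyadicCube n vQ mQ) ^ (-(1 / q)) *
      (∑' v : ℕ, if vQ ≤ (v : ℤ) then
          ∫⁻ x in dyadicCube n vQ mQ,
            ∑' m : Fin n → ℤ,
              ENNReal.ofReal ((2 : ℝ) ^ ((v : ℝ) * (α x + n / 2) * q) * ‖lam v m‖ ^ q) *
                (dyadicCube n (v : ℤ) m).indicator (fun _ => (1 : ℝ≥0∞)) x
        else 0) ^ (1 / q)

/-- The Calderón product (quasi-)norm associated to two sequence space norms. -/
def calderonNorm {n : ℕ} (N0 N1 : (ℕ → (Fin n → ℤ) → ℂ) → ℝ≥0∞) (θ : ℝ)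
    (lam : ℕ → (Fin n → ℤ) → ℂ) : ℝ≥0∞ :=
  sInf {M : ℝ≥0∞ | ∃ μ ν : ℕ → (Fin n → ℤ) → ℂ, N0 μ ≤ 1 ∧ N1 ν ≤ 1 ∧
    ∀ v m, ENNReal.ofReal ‖lam v m‖ ≤
      M * ENNReal.ofReal ‖μ v m‖ ^ (1 - θ) * ENNReal.ofReal ‖ν v m‖ ^ θ}

/-!
The bound of `‖λ‖` by the Calderón product is Young's inequality
`(a^{1-θ} b^θ)^p ≤ a^{p₀} + b^{p₁}`, integrated. For the converse, normalise `λ` and write `y` for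
the corner of `Q_{v,m}`. With constant exponents one would take `H = 2^{v(α(y)+n/2)} |λ_{v,m}|` and
factor `H = (H^{p/p₀})^{1-θ} (H^{p/p₁})^θ`; here this is done with the exponents frozen at `y`, so
that the factors are sequences. Unfreezing `H^{p(y)/p₀(y)}` at `x ∈ Q_{v,m}` costs `H^{e(x)}`, where
log-Hölder continuity gives `|e(x)| ≲ 1 / (1 + v + log(e + |x|))`. This is a bounded factor as soon
as `|log H| ≲ 1 + v + log(e + |x|)`: the upper bound on `H` holds because one cube carries at most
the whole modular, and the lower bound is forced by raising `H` to a small power of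
`2^{-v} (1 + |y|)^{-n-1}`, which is summable in `v` and integrable in `y`.
-/

section MixedNorm

variable {n : ℕ} {p p₀ p₁ : En n → ℝ} {F G F₀ F₁ : ℕ → En n → ℝ≥0∞} {c K M : ℝ≥0∞} {r θ : ℝ}

/-- The modular `∫ ∑_v F_v(x)^{p(x)} dx` whose Luxemburg norm is that of `L^{p(·)}(ℓ_{p(·)})`. -/
def mixedModular (p : En n → ℝ) (F : ℕ → En n → ℝ≥0∞) : ℝ≥0∞ :=
  ∫⁻ x, ∑' v, F v x ^ p x

lemma mixedModular_mono (hp : ∀ x, 0 ≤ p x) (h : ∀ v x, F v x ≤ G v x) :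
    mixedModular p F ≤ mixedModular p G :=
  lintegral_mono fun x => ENNReal.tsum_le_tsum fun v => ENNReal.rpow_le_rpow (h v x) (hp x)

lemma tsum_rpow_one_div_div_rpow {ι : Type*} {s : ℝ} (hs : 0 < s) (f : ι → ℝ≥0∞) (c : ℝ≥0∞) :
    ((∑' i, f i ^ s) ^ (1 / s) / c) ^ s = ∑' i, (f i / c) ^ s := by
  simp only [ENNReal.div_rpow_of_nonneg _ _ hs.le]
  rw [one_div s, ENNReal.rpow_inv_rpow hs.ne']
  simp only [div_eq_mul_inv, ENNReal.tsum_mul_right]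

lemma mixedNorm_self (hp : ∀ x, 0 < p x) (F : ℕ → En n → ℝ≥0∞) :
    mixedNorm p p F =
      sInf {c : ℝ≥0∞ | 0 < c ∧ mixedModular p (fun v x => F v x / c) ≤ 1} := by
  simp only [mixedNorm, luxNorm, mixedModular, tsum_rpow_one_div_div_rpow (hp _)]

lemma mixedModular_div_le_one_of_mixedNorm_lt (hp : ∀ x, 0 < p x) (h : mixedNorm p p F < c) :
    mixedModular p (fun v x => F v x / c) ≤ 1 := by
  rw [mixedNorm_self hp, sInf_lt_iff] at h
  obtain ⟨d, ⟨-, hd⟩, hdc⟩ := h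
  exact (mixedModular_mono (fun x => (hp x).le)
    fun v x => ENNReal.div_le_div_left hdc.le (F v x)).trans hd

lemma mixedNorm_le_rpow_mul (hr : 0 < r) (hp : ∀ x, r ≤ p x) (hK : 1 ≤ K) (hc : c ≠ 0)
    (h : mixedModular p (fun v x => F v x / c) ≤ K) : mixedNorm p p F ≤ K ^ r⁻¹ * c := by
  have hp0 : ∀ x, 0 < p x := fun x => hr.trans_le (hp x)
  have hKr : 1 ≤ K ^ r⁻¹ := ENNReal.one_le_rpow hK (inv_pos.2 hr)
  have hK0 : K ≠ 0 := (zero_lt_one.trans_le hK).ne'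
  have hKr0 : K ^ r⁻¹ ≠ 0 := (zero_lt_one.trans_le hKr).ne'
  have hterm : ∀ v x, (F v x / (K ^ r⁻¹ * c)) ^ p x ≤ K⁻¹ * (F v x / c) ^ p x := by
    intro v x
    have hKp : K ≤ (K ^ r⁻¹) ^ p x := by
      rw [← ENNReal.rpow_mul, ← div_eq_inv_mul]
      simpa only [ENNReal.rpow_one] using
        ENNReal.rpow_le_rpow_of_exponent_le hK ((one_le_div hr).2 (hp x))
    calc (F v x / (K ^ r⁻¹ * c)) ^ p x = ((K ^ r⁻¹) ^ p x)⁻¹ * (F v x / c) ^ p x := by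
          rw [div_eq_mul_inv, ENNReal.mul_inv (.inl hKr0) (.inr hc), mul_left_comm,
            ← div_eq_mul_inv, ENNReal.mul_rpow_of_nonneg _ _ (hp0 x).le, ENNReal.inv_rpow]
      _ ≤ K⁻¹ * (F v x / c) ^ p x := by gcongr
  rw [mixedNorm_self hp0]
  refine sInf_le ⟨pos_iff_ne_zero.2 (mul_ne_zero hKr0 hc), ?_⟩
  calc mixedModular p (fun v x => F v x / (K ^ r⁻¹ * c))
      ≤ ∫⁻ x, K⁻¹ * ∑' v, (F v x / c) ^ p x := by
        refine lintegral_mono fun x => ?_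
        rw [← ENNReal.tsum_mul_left]
        exact ENNReal.tsum_le_tsum fun v => hterm v x
    _ = K⁻¹ * mixedModular p (fun v x => F v x / c) :=
        lintegral_const_mul' _ _ (ENNReal.inv_ne_top.2 hK0)
    _ ≤ K⁻¹ * K := by gcongr
    _ ≤ 1 := ENNReal.inv_mul_le_one K

lemma rpow_mul_rpow_le_add {s t : ℝ} (hs : 0 ≤ s) (ht : 0 ≤ t) (hst : s + t = 1) (a b : ℝ≥0∞) :
    a ^ s * b ^ t ≤ a + b :=
  calc a ^ s * b ^ t ≤ (a + b) ^ s * (a + b) ^ t := by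
        gcongr
        · exact le_self_add
        · exact le_add_self
    _ = a + b := by rw [← ENNReal.rpow_add_of_nonneg _ _ hs ht, hst, ENNReal.rpow_one]

lemma mem_Icc_of_one_div_eq {s s₀ s₁ b : ℝ} (hθ : θ ∈ Ioo (0 : ℝ) 1) (hr : 0 < r)
    (hs₀ : s₀ ∈ Icc r b) (hs₁ : s₁ ∈ Icc r b) (hs : 1 / s = (1 - θ) / s₀ + θ / s₁) :
    s ∈ Icc r b := by
  have hinv : ∀ t ∈ Icc r b, t⁻¹ ∈ Icc b⁻¹ r⁻¹ := fun t ht =>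
    ⟨inv_anti₀ (hr.trans_le ht.1) ht.2, inv_anti₀ hr ht.1⟩
  have hmem : s⁻¹ ∈ Icc b⁻¹ r⁻¹ := by
    rw [inv_eq_one_div s, hs]
    exact convex_Icc _ _ (hinv s₀ hs₀) (hinv s₁ hs₁) (sub_nonneg.2 hθ.2.le) hθ.1.le (by ring)
  have hb : 0 < b := hr.trans_le (hs₀.1.trans hs₀.2)
  have hspos : 0 < s := inv_pos.1 ((inv_pos.2 hb).trans_le hmem.1)
  exact ⟨(inv_le_inv₀ hspos hr).1 hmem.2, (inv_le_inv₀ hb hspos).1 hmem.1⟩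

lemma geomMean_rpow_le_add {s s₀ s₁ : ℝ} (hθ : θ ∈ Ioo (0 : ℝ) 1) (hs : 0 < s) (hs₀ : 0 < s₀)
    (hs₁ : 0 < s₁) (h : 1 / s = (1 - θ) / s₀ + θ / s₁) (a b : ℝ≥0∞) :
    (a ^ (1 - θ) * b ^ θ) ^ s ≤ a ^ s₀ + b ^ s₁ := by
  have hθ' : 0 < 1 - θ := sub_pos.2 hθ.2
  have hθ0 := hθ.1
  have hsum : (1 - θ) * s / s₀ + θ * s / s₁ = 1 := by
    calc _ = s * ((1 - θ) / s₀ + θ / s₁) := by ring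
      _ = 1 := by rw [← h, mul_one_div_cancel hs.ne']
  calc (a ^ (1 - θ) * b ^ θ) ^ s
      = (a ^ s₀) ^ ((1 - θ) * s / s₀) * (b ^ s₁) ^ (θ * s / s₁) := by
        simp only [ENNReal.mul_rpow_of_nonneg _ _ hs.le, ← ENNReal.rpow_mul,
          mul_div_cancel₀ _ hs₀.ne', mul_div_cancel₀ _ hs₁.ne']
    _ ≤ a ^ s₀ + b ^ s₁ := rpow_mul_rpow_le_add (by positivity) (by positivity) hsum _ _

lemma mixedModular_le_add_of_le_geomMean (hθ : θ ∈ Ioo (0 : ℝ) 1) (hp : ∀ x, 0 < p x)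
    (hp₀ : ∀ x, 0 < p₀ x) (hp₁ : ∀ x, 0 < p₁ x)
    (hpθ : ∀ x, 1 / p x = (1 - θ) / p₀ x + θ / p₁ x)
    (hp₀m : Measurable p₀) (hF₀ : ∀ v, Measurable (F₀ v))
    (h : ∀ v x, F v x ≤ F₀ v x ^ (1 - θ) * F₁ v x ^ θ) :
    mixedModular p F ≤ mixedModular p₀ F₀ + mixedModular p₁ F₁ := by
  have hmeas : Measurable fun x => ∑' v, F₀ v x ^ p₀ x :=
    Measurable.tsum fun v => (hF₀ v).pow hp₀m
  simp only [mixedModular]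
  rw [← lintegral_add_left hmeas]
  refine lintegral_mono fun x => ?_
  rw [← ENNReal.tsum_add]
  refine ENNReal.tsum_le_tsum fun v => ?_
  exact (ENNReal.rpow_le_rpow (h v x) (hp x).le).trans
    (geomMean_rpow_le_add hθ (hp x) (hp₀ x) (hp₁ x) (hpθ x) _ _)

lemma mixedNorm_le_of_le_geomMean (hθ : θ ∈ Ioo (0 : ℝ) 1) (hr : 0 < r) (hp : ∀ x, r ≤ p x)
    (hp₀ : ∀ x, 0 < p₀ x) (hp₁ : ∀ x, 0 < p₁ x)
    (hpθ : ∀ x, 1 / p x = (1 - θ) / p₀ x + θ / p₁ x)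
    (hp₀m : Measurable p₀) (hF₀m : ∀ v, Measurable (F₀ v)) (hM : M ≠ 0)
    (hF₀ : mixedNorm p₀ p₀ F₀ ≤ 1) (hF₁ : mixedNorm p₁ p₁ F₁ ≤ 1)
    (h : ∀ v x, F v x ≤ M * (F₀ v x ^ (1 - θ) * F₁ v x ^ θ)) :
    mixedNorm p p F ≤ 2 ^ r⁻¹ * (2 * M) := by
  have hρ₀ := mixedModular_div_le_one_of_mixedNorm_lt hp₀ (hF₀.trans_lt ENNReal.one_lt_two)
  have hρ₁ := mixedModular_div_le_one_of_mixedNorm_lt hp₁ (hF₁.trans_lt ENNReal.one_lt_two)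
  refine mixedNorm_le_rpow_mul hr hp one_le_two (mul_ne_zero two_ne_zero hM) ?_
  have hmean : ∀ v x, F v x / (2 * M) ≤ (F₀ v x / 2) ^ (1 - θ) * (F₁ v x / 2) ^ θ := by
    intro v x
    have htwo : (2 : ℝ≥0∞) ^ (1 - θ) * 2 ^ θ = 2 := by
      rw [← ENNReal.rpow_add _ _ two_ne_zero ENNReal.ofNat_ne_top, sub_add_cancel,
        ENNReal.rpow_one]
    refine ENNReal.div_le_of_le_mul ((h v x).trans_eq ?_)
    have hdiv : ∀ a : ℝ≥0∞, a / 2 * 2 = a := fun a =>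
      ENNReal.div_mul_cancel two_ne_zero ENNReal.ofNat_ne_top
    calc M * (F₀ v x ^ (1 - θ) * F₁ v x ^ θ)
        = M * ((F₀ v x / 2 * 2) ^ (1 - θ) * (F₁ v x / 2 * 2) ^ θ) := by simp only [hdiv]
      _ = (F₀ v x / 2) ^ (1 - θ) * (F₁ v x / 2) ^ θ * (2 ^ (1 - θ) * 2 ^ θ * M) := by
          rw [ENNReal.mul_rpow_of_nonneg _ _ (sub_nonneg.2 hθ.2.le),
            ENNReal.mul_rpow_of_nonneg _ _ hθ.1.le]
          ring
      _ = _ := by rw [htwo]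
  calc mixedModular p (fun v x => F v x / (2 * M)) ≤ 1 + 1 :=
        (mixedModular_le_add_of_le_geomMean hθ (fun x => hr.trans_le (hp x)) hp₀ hp₁ hpθ hp₀m
          (fun v => (hF₀m v).div_const 2) hmean).trans (add_le_add hρ₀ hρ₁)
    _ = 2 := one_add_one_eq_two

end MixedNorm

section DyadicGrid

variable {n : ℕ}

/-- The index `m` of the cube `Q_{v,m}` of level `v ≥ 0` containing `x`. -/
def dyadicIndex (v : ℕ) (x : En n) : Fin n → ℤ := fun i => ⌊(2 : ℝ) ^ v * x i⌋

/-- The corner `2^{-v} m` of `Q_{v,m}`, the point of the cube at which exponents are frozen. -/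
def dyadicCorner (v : ℕ) (m : Fin n → ℤ) : En n := WithLp.toLp 2 fun i => (m i : ℝ) / 2 ^ v

/-- The corner of the cube of level `v` containing `x`. -/
abbrev basePoint (v : ℕ) (x : En n) : En n := dyadicCorner v (dyadicIndex v x)

lemma mem_dyadicCube_iff {v : ℕ} {m : Fin n → ℤ} {x : En n} :
    x ∈ dyadicCube n v m ↔ dyadicIndex v x = m := by
  simp only [dyadicCube, mem_ofPred_eq, zpow_natCast, dyadicIndex, funext_iff, Int.floor_eq_iff]

lemma measurable_dyadicIndex (v : ℕ) : Measurable (dyadicIndex v : En n → Fin n → ℤ) :=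
  measurable_pi_lambda _ fun i => Int.measurable_floor.comp (by fun_prop)

lemma volume_dyadicCube (v : ℕ) (m : Fin n → ℤ) :
    volume (dyadicCube n v m) = ENNReal.ofReal ((2 ^ (v * n))⁻¹) := by
  have hv : (0 : ℝ) < 2 ^ v := by positivity
  have hbox : dyadicCube n v m = (MeasurableEquiv.toLp 2 (Fin n → ℝ)).symm ⁻¹'
      Set.pi univ fun i => Ico ((m i : ℝ) / 2 ^ v) ((m i + 1 : ℝ) / 2 ^ v) := by
    ext x
    simp only [dyadicCube, mem_ofPred_eq, zpow_natCast, mem_preimage, mem_pi, mem_univ,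
      true_implies, mem_Ico, div_le_iff₀' hv, lt_div_iff₀' hv,
      MeasurableEquiv.coe_toLp_symm]
  have hside : ∀ i, (m i + 1 : ℝ) / 2 ^ v - m i / 2 ^ v = (2 ^ v)⁻¹ := fun i => by ring
  rw [hbox, (EuclideanSpace.volume_preserving_symm_measurableEquiv_toLp
    (Fin n)).measure_preimage_equiv, Real.volume_pi_Ico]
  simp only [hside, Finset.prod_const, Finset.card_univ, Fintype.card_fin]
  rw [← ENNReal.ofReal_pow (by positivity), pow_mul, inv_pow]

lemma measurableSet_dyadicCube (v : ℕ) (m : Fin n → ℤ) : MeasurableSet (dyadicCube n v m) := by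
  have hpre : dyadicCube n v m = dyadicIndex v ⁻¹' {m} := by
    ext x
    exact mem_dyadicCube_iff
  exact hpre ▸ measurable_dyadicIndex v (measurableSet_singleton m)

lemma norm_sub_basePoint_le (v : ℕ) (x : En n) : ‖x - basePoint v x‖ ≤ n / 2 ^ v := by
  have hv : (0 : ℝ) < 2 ^ v := by positivity
  have hcoord : ∀ i, ‖(x - basePoint v x) i‖ ^ 2 ≤ (1 / 2 ^ v : ℝ) ^ 2 := by
    intro i
    have hfract : (x - basePoint v x) i = Int.fract (2 ^ v * x i) / 2 ^ v := by
      change x i - (⌊(2 : ℝ) ^ v * x i⌋ : ℝ) / 2 ^ v = _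
      rw [Int.fract]
      field_simp
    rw [hfract, Real.norm_of_nonneg (div_nonneg (Int.fract_nonneg _) hv.le)]
    gcongr
    exact (Int.fract_lt_one _).le
  rw [EuclideanSpace.norm_eq]
  refine Real.sqrt_le_iff.2 ⟨by positivity, ?_⟩
  calc ∑ i, ‖(x - basePoint v x) i‖ ^ 2 ≤ ∑ _i : Fin n, (1 / 2 ^ v : ℝ) ^ 2 :=
        Finset.sum_le_sum fun i _ => hcoord i
    _ = n * (1 / 2 ^ v) ^ 2 := by simp
    _ ≤ n ^ 2 * (1 / 2 ^ v) ^ 2 := by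
        gcongr
        exact_mod_cast Nat.le_self_pow two_ne_zero n
    _ = (n / 2 ^ v) ^ 2 := by ring

lemma norm_sub_basePoint_le_dim (v : ℕ) (x : En n) : ‖x - basePoint v x‖ ≤ n :=
  (norm_sub_basePoint_le v x).trans
    (div_le_self n.cast_nonneg (one_le_pow₀ one_le_two))

end DyadicGrid

section LogHolder

variable {n : ℕ} {g g₀ g₁ : En n → ℝ} {c D : ℝ} {x y : En n} {v : ℕ}

/-- The weight `1 + v + log(e + |x|)`, comparable to `log(2^v (e + |x|))`: an exponent that
varies by at most a multiple of its inverse may be frozen on `Q_{v,m} ∋ x`. -/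
def logWeight (v : ℕ) (x : En n) : ℝ := 1 + v + Real.log (Real.exp 1 + ‖x‖)

/-- `g` oscillates on the cube of level `v` around `x` by at most a multiple of `1 / w v x`. -/
def BoundedCellOsc (w : ℕ → En n → ℝ) (g : En n → ℝ) : Prop :=
  ∃ C, 0 ≤ C ∧ ∀ v x, |g x - g (basePoint v x)| * w v x ≤ C

lemma one_le_log_exp_one_add {t : ℝ} (ht : 0 ≤ t) : 1 ≤ Real.log (Real.exp 1 + t) := by
  rw [Real.le_log_iff_exp_le (by positivity)]
  linarith

lemma one_add_le_logWeight (v : ℕ) (x : En n) : 1 + (v : ℝ) ≤ logWeight v x :=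
  le_add_of_nonneg_right (zero_le_one.trans (one_le_log_exp_one_add (norm_nonneg x)))

lemma logWeight_nonneg (v : ℕ) (x : En n) : 0 ≤ logWeight v x :=
  (by positivity : (0 : ℝ) ≤ 1 + v).trans (one_add_le_logWeight v x)

lemma log_exp_one_add_norm_le (hxy : ‖x - y‖ ≤ D) :
    Real.log (Real.exp 1 + ‖y‖) ≤ (1 + D) * Real.log (Real.exp 1 + ‖x‖) := by
  have hD : 0 ≤ D := (norm_nonneg _).trans hxy
  have hlog := one_le_log_exp_one_add (norm_nonneg x)
  have hmul : Real.exp 1 + ‖y‖ ≤ (1 + D) * (Real.exp 1 + ‖x‖) := by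
    have hy := norm_le_norm_add_norm_sub x y
    have he := Real.one_le_exp zero_le_one
    nlinarith [norm_nonneg x]
  calc Real.log (Real.exp 1 + ‖y‖) ≤ Real.log ((1 + D) * (Real.exp 1 + ‖x‖)) :=
        Real.log_le_log (by positivity) hmul
    _ = Real.log (1 + D) + Real.log (Real.exp 1 + ‖x‖) :=
        Real.log_mul (by positivity) (by positivity)
    _ ≤ D + Real.log (Real.exp 1 + ‖x‖) := by
        gcongr
        linarith [Real.log_le_sub_one_of_pos (by positivity : 0 < 1 + D)]
    _ ≤ (1 + D) * Real.log (Real.exp 1 + ‖x‖) := by nlinarith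

lemma logWeight_le_of_norm_sub_le (hxy : ‖x - y‖ ≤ D) :
    logWeight v y ≤ (1 + D) * logWeight v x := by
  have hD : 0 ≤ D := (norm_nonneg _).trans hxy
  have hlog := log_exp_one_add_norm_le hxy
  unfold logWeight
  nlinarith [mul_nonneg hD (by positivity : (0 : ℝ) ≤ 1 + v)]

lemma LocLogHolder.continuous (h : LocLogHolder c g) : Continuous g := by
  refine continuous_iff_continuousAt.2 fun x => ?_
  rw [continuousAt_iff_punctured_nhds, tendsto_iff_norm_sub_tendsto_zero]
  refine squeeze_zero (fun _ => norm_nonneg _) (fun y => h.2 y x) ?_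
  refine Filter.Tendsto.const_div_atTop (Real.tendsto_log_atTop.comp ?_) _
  refine Filter.tendsto_atTop_add_const_left _ _ ?_
  simp only [one_div]
  exact tendsto_inv_nhdsGT_zero.comp (tendsto_norm_sub_self_nhdsNE x)

lemma LocLogHolder.abs_sub_mul_le (h : LocLogHolder c g) (hxy : ‖x - y‖ ≤ D / 2 ^ v) :
    |g x - g y| * (1 + v) ≤ c * (2 * D + 3) := by
  have hc := h.1
  have hD : 0 ≤ D := by
    have hquot : 0 ≤ D / 2 ^ v := (norm_nonneg _).trans hxy
    rwa [le_div_iff₀ (by positivity), zero_mul] at hquot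
  rcases (norm_nonneg (x - y)).eq_or_lt with hzero | hpos
  · rw [sub_eq_zero.1 (norm_eq_zero.1 hzero.symm), sub_self, abs_zero, zero_mul]
    positivity
  set T := Real.log (Real.exp 1 + 1 / ‖x - y‖)
  have hT : 1 ≤ T := one_le_log_exp_one_add (by positivity)
  have hDpos : 0 < D := by
    rw [le_div_iff₀ (by positivity)] at hxy
    exact (by positivity : 0 < ‖x - y‖ * 2 ^ v).trans_le hxy
  have hlevel : (v : ℝ) * Real.log 2 ≤ D + T := by
    have hpow : (2 : ℝ) ^ v ≤ D * (Real.exp 1 + 1 / ‖x - y‖) := by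
      rw [le_div_comm₀ hpos (by positivity), div_eq_mul_one_div] at hxy
      exact hxy.trans (by gcongr; exact le_add_of_nonneg_left (Real.exp_pos 1).le)
    calc (v : ℝ) * Real.log 2 = Real.log (2 ^ v) := (Real.log_pow _ _).symm
      _ ≤ Real.log (D * (Real.exp 1 + 1 / ‖x - y‖)) := Real.log_le_log (by positivity) hpow
      _ = Real.log D + T := Real.log_mul hDpos.ne' (by positivity)
      _ ≤ D + T := by gcongr; linarith [Real.log_le_sub_one_of_pos hDpos]
  have hv : 1 + (v : ℝ) ≤ T * (2 * D + 3) := by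
    have hlog2 : 1 / 2 ≤ Real.log 2 := by linarith [Real.log_two_gt_d9]
    nlinarith [mul_le_mul_of_nonneg_left hlog2 v.cast_nonneg]
  have hosc : |g x - g y| * T ≤ c := (le_div_iff₀ (zero_lt_one.trans_le hT)).1 (h.2 x y)
  calc |g x - g y| * (1 + v) ≤ |g x - g y| * (T * (2 * D + 3)) := by gcongr
    _ = |g x - g y| * T * (2 * D + 3) := by ring
    _ ≤ c * (2 * D + 3) := by gcongr

lemma abs_sub_mul_log_le {gi d : ℝ}
    (hg : ∀ x : En n, |g x - gi| ≤ d / Real.log (Real.exp 1 + ‖x‖)) (hxy : ‖x - y‖ ≤ D) :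
    |g x - g y| * Real.log (Real.exp 1 + ‖x‖) ≤ d * (D + 2) := by
  have hD : 0 ≤ D := (norm_nonneg _).trans hxy
  have hdecay : ∀ z : En n, |g z - gi| * Real.log (Real.exp 1 + ‖z‖) ≤ d := fun z =>
    (le_div_iff₀ (zero_lt_one.trans_le (one_le_log_exp_one_add (norm_nonneg z)))).1 (hg z)
  have hlog : 0 ≤ Real.log (Real.exp 1 + ‖x‖) :=
    zero_le_one.trans (one_le_log_exp_one_add (norm_nonneg x))
  have hcompare := log_exp_one_add_norm_le (norm_sub_rev x y ▸ hxy)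
  have htri : |g x - g y| ≤ |g x - gi| + |g y - gi| := by
    simpa only [abs_sub_comm gi] using abs_sub_le (g x) gi (g y)
  calc |g x - g y| * Real.log (Real.exp 1 + ‖x‖)
      ≤ (|g x - gi| + |g y - gi|) * Real.log (Real.exp 1 + ‖x‖) := by gcongr
    _ = |g x - gi| * Real.log (Real.exp 1 + ‖x‖)
        + |g y - gi| * Real.log (Real.exp 1 + ‖x‖) := by ring
    _ ≤ d + |g y - gi| * ((1 + D) * Real.log (Real.exp 1 + ‖y‖)) := by
        gcongr
        exact hdecay x
    _ = d + |g y - gi| * Real.log (Real.exp 1 + ‖y‖) * (1 + D) := by ring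
    _ ≤ d + d * (1 + D) := by gcongr; exact hdecay y
    _ = d * (D + 2) := by ring

lemma LocLogHolder.boundedCellOsc (h : LocLogHolder c g) :
    BoundedCellOsc (fun v _ => 1 + v) g :=
  ⟨c * (2 * n + 3), mul_nonneg h.1.le (by positivity),
    fun v x => h.abs_sub_mul_le (norm_sub_basePoint_le v x)⟩

lemma GlobLogHolder.boundedCellOsc (h : GlobLogHolder c g) : BoundedCellOsc logWeight g := by
  obtain ⟨hloc, gi, d, hd, hg⟩ := h
  have hc := hloc.1
  refine ⟨c * (2 * n + 3) + d * (n + 2), by positivity, fun v x => ?_⟩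
  rw [logWeight, mul_add]
  exact add_le_add (hloc.abs_sub_mul_le (norm_sub_basePoint_le v x))
    (abs_sub_mul_log_le hg (norm_sub_basePoint_le_dim v x))

lemma BoundedCellOsc.of_abs_sub_le {w : ℕ → En n → ℝ} (hw : ∀ v x, 0 ≤ w v x)
    (h₀ : BoundedCellOsc w g₀) (h₁ : BoundedCellOsc w g₁) {A : ℝ} (hA : 0 ≤ A)
    (h : ∀ x y, |g x - g y| ≤ A * (|g₀ x - g₀ y| + |g₁ x - g₁ y|)) : BoundedCellOsc w g := by
  obtain ⟨C₀, hC₀, hosc₀⟩ := h₀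
  obtain ⟨C₁, hC₁, hosc₁⟩ := h₁
  refine ⟨A * (C₀ + C₁), by positivity, fun v x => ?_⟩
  calc |g x - g (basePoint v x)| * w v x
      ≤ A * (|g₀ x - g₀ (basePoint v x)| + |g₁ x - g₁ (basePoint v x)|) * w v x :=
        mul_le_mul_of_nonneg_right (h _ _) (hw v x)
    _ = A * (|g₀ x - g₀ (basePoint v x)| * w v x
        + |g₁ x - g₁ (basePoint v x)| * w v x) := by ring
    _ ≤ A * (C₀ + C₁) := by
        gcongr
        · exact hosc₀ v x
        · exact hosc₁ v x

lemma abs_convexComb_sub_le {θ : ℝ} (hθ : θ ∈ Ioo (0 : ℝ) 1) (a₀ a₁ b₀ b₁ : ℝ) :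
    |((1 - θ) * a₀ + θ * a₁) - ((1 - θ) * b₀ + θ * b₁)| ≤ |a₀ - b₀| + |a₁ - b₁| := by
  obtain ⟨hθ0, hθ1⟩ := hθ
  calc |((1 - θ) * a₀ + θ * a₁) - ((1 - θ) * b₀ + θ * b₁)|
      = |(1 - θ) * (a₀ - b₀) + θ * (a₁ - b₁)| := by congr 1; ring
    _ ≤ (1 - θ) * |a₀ - b₀| + θ * |a₁ - b₁| := by
        refine (abs_add_le _ _).trans_eq ?_
        rw [abs_mul, abs_mul, abs_of_pos hθ0, abs_of_pos (sub_pos.2 hθ1)]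
    _ ≤ |a₀ - b₀| + |a₁ - b₁| :=
        add_le_add (mul_le_of_le_one_left (abs_nonneg _) (by linarith))
          (mul_le_of_le_one_left (abs_nonneg _) hθ1.le)

lemma BoundedCellOsc.convexComb {w : ℕ → En n → ℝ} {θ : ℝ} (hθ : θ ∈ Ioo (0 : ℝ) 1)
    (hw : ∀ v x, 0 ≤ w v x) (h₀ : BoundedCellOsc w g₀) (h₁ : BoundedCellOsc w g₁)
    (hg : ∀ x, g x = (1 - θ) * g₀ x + θ * g₁ x) : BoundedCellOsc w g :=
  .of_abs_sub_le hw h₀ h₁ zero_le_one fun x y => by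
    rw [one_mul, hg, hg]
    exact abs_convexComb_sub_le hθ _ _ _ _

lemma abs_inv_sub_inv_le {r s t : ℝ} (hr : 0 < r) (hs : r ≤ s) (ht : r ≤ t) :
    |s⁻¹ - t⁻¹| ≤ |s - t| / r ^ 2 := by
  have hs0 : 0 < s := hr.trans_le hs
  have ht0 : 0 < t := hr.trans_le ht
  rw [inv_sub_inv hs0.ne' ht0.ne', abs_div, abs_sub_comm, abs_of_pos (mul_pos hs0 ht0), sq]
  gcongr

lemma BoundedCellOsc.inv {w : ℕ → En n → ℝ} (hw : ∀ v x, 0 ≤ w v x)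
    (h : BoundedCellOsc w g) {r : ℝ} (hr : 0 < r) (hg : ∀ x, r ≤ g x) :
    BoundedCellOsc w fun x => (g x)⁻¹ := by
  refine .of_abs_sub_le hw h h (by positivity : 0 ≤ (r ^ 2)⁻¹) fun x y => ?_
  refine (abs_inv_sub_inv_le hr (hg x) (hg y)).trans ?_
  rw [div_eq_inv_mul]
  gcongr
  exact le_add_of_nonneg_right (abs_nonneg _)

lemma BoundedCellOsc.of_one_div_eq {w : ℕ → En n → ℝ} {θ r b : ℝ} (hθ : θ ∈ Ioo (0 : ℝ) 1)
    (hw : ∀ v x, 0 ≤ w v x) (h₀ : BoundedCellOsc w g₀) (h₁ : BoundedCellOsc w g₁) (hr : 0 < r)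
    (hg₀ : ∀ x, g₀ x ∈ Icc r b) (hg₁ : ∀ x, g₁ x ∈ Icc r b)
    (hg : ∀ x, 1 / g x = (1 - θ) / g₀ x + θ / g₁ x) : BoundedCellOsc w g := by
  have hinv : BoundedCellOsc w fun x => (g x)⁻¹ :=
    .convexComb hθ hw (h₀.inv hw hr fun x => (hg₀ x).1) (h₁.inv hw hr fun x => (hg₁ x).1)
      fun x => by simpa only [div_eq_mul_inv, one_mul] using hg x
  have hb : 0 < b := hr.trans_le ((hg₀ 0).1.trans (hg₀ 0).2)
  have hlower : ∀ x, b⁻¹ ≤ (g x)⁻¹ := fun x => by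
    have hx := mem_Icc_of_one_div_eq hθ hr (hg₀ x) (hg₁ x) (hg x)
    exact inv_anti₀ (hr.trans_le hx.1) hx.2
  simpa only [inv_inv] using hinv.inv hw (inv_pos.2 hb) hlower

end LogHolder

section LevelFunctions

variable {n : ℕ} {α α₀ α₁ p q : En n → ℝ} {lam μ ν : ℕ → (Fin n → ℤ) → ℂ} {θ : ℝ}

/-- The factor `2^{v(s+n/2)}` multiplying the coefficients of level `v` where the smoothness
is `s`. -/
def dyadicWeight (n v : ℕ) (s : ℝ) : ℝ := 2 ^ ((v : ℝ) * (s + n / 2))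

/-- The level `v` function `∑_m 2^{v(α(·)+n/2)} |λ_{v,m}| χ_{v,m}` of a sequence; the sum has only
the one term with `x ∈ Q_{v,m}`. -/
def levelFun (α : En n → ℝ) (lam : ℕ → (Fin n → ℤ) → ℂ) (v : ℕ) (x : En n) : ℝ :=
  dyadicWeight n v (α x) * ‖lam v (dyadicIndex v x)‖

/-- The modular whose Luxemburg norm is the norm of `f^{α(·)}_{p(·),p(·)}`. -/
def seqModular (α p : En n → ℝ) (lam : ℕ → (Fin n → ℤ) → ℂ) : ℝ≥0∞ :=
  mixedModular p fun v x => ENNReal.ofReal (levelFun α lam v x)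

lemma dyadicWeight_pos (v : ℕ) (s : ℝ) : 0 < dyadicWeight n v s := Real.rpow_pos_of_pos two_pos _

lemma dyadicWeight_convexComb (v : ℕ) (s t θ : ℝ) :
    dyadicWeight n v ((1 - θ) * s + θ * t) =
      dyadicWeight n v s ^ (1 - θ) * dyadicWeight n v t ^ θ := by
  simp only [dyadicWeight]
  rw [← Real.rpow_mul two_pos.le, ← Real.rpow_mul two_pos.le, ← Real.rpow_add two_pos]
  congr 1
  ring

lemma dyadicWeight_le {v : ℕ} {s t C : ℝ} (h : |s - t| * (1 + v) ≤ C) :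
    dyadicWeight n v s ≤ 2 ^ C * dyadicWeight n v t := by
  rw [dyadicWeight, dyadicWeight, ← Real.rpow_add two_pos]
  refine Real.rpow_le_rpow_of_exponent_le one_le_two ?_
  nlinarith [le_abs_self (s - t), abs_nonneg (s - t), (v.cast_nonneg : (0 : ℝ) ≤ v)]

lemma levelFun_nonneg (α : En n → ℝ) (lam : ℕ → (Fin n → ℤ) → ℂ) (v : ℕ) (x : En n) :
    0 ≤ levelFun α lam v x :=
  mul_nonneg (dyadicWeight_pos _ _).le (norm_nonneg _)

lemma levelFun_smul (c : ℝ) (v : ℕ) (x : En n) :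
    levelFun α (c • lam) v x = |c| * levelFun α lam v x := by
  simp only [levelFun, Pi.smul_apply, norm_smul, Real.norm_eq_abs, mul_left_comm]

lemma measurable_levelFun (hα : Measurable α) (lam : ℕ → (Fin n → ℤ) → ℂ) (v : ℕ) :
    Measurable (levelFun α lam v) := by
  have hcoeff : Measurable fun x : En n => ‖lam v (dyadicIndex v x)‖ :=
    (measurable_of_countable fun m => ‖lam v m‖).comp (measurable_dyadicIndex v)
  unfold levelFun dyadicWeight
  fun_prop

lemma seqNorm_eq_mixedNorm (α p q : En n → ℝ) (lam : ℕ → (Fin n → ℤ) → ℂ) :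
    seqNorm α p q lam = mixedNorm p q fun v x => ENNReal.ofReal (levelFun α lam v x) := by
  unfold seqNorm
  congr 1
  ext v x
  rw [tsum_eq_single (dyadicIndex v x)]
  · rw [indicator_of_mem (mem_dyadicCube_iff.2 rfl), mul_one, levelFun, dyadicWeight]
  · intro m hm
    rw [indicator_of_notMem (fun hx => hm (mem_dyadicCube_iff.1 hx).symm), mul_zero]

lemma ofReal_levelFun_le_geomMean {M : ℝ≥0∞} (hθ : θ ∈ Ioo (0 : ℝ) 1)
    (hα : ∀ x, α x = (1 - θ) * α₀ x + θ * α₁ x)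
    (h : ∀ v m, ENNReal.ofReal ‖lam v m‖ ≤
      M * ENNReal.ofReal ‖μ v m‖ ^ (1 - θ) * ENNReal.ofReal ‖ν v m‖ ^ θ) (v : ℕ) (x : En n) :
    ENNReal.ofReal (levelFun α lam v x) ≤
      M * (ENNReal.ofReal (levelFun α₀ μ v x) ^ (1 - θ) *
        ENNReal.ofReal (levelFun α₁ ν v x) ^ θ) := by
  have hθ0 : 0 ≤ θ := hθ.1.le
  have hθ1 : 0 ≤ 1 - θ := sub_nonneg.2 hθ.2.le
  have hW := fun s : ℝ => (dyadicWeight_pos (n := n) v s)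
  have hweight : ENNReal.ofReal (dyadicWeight n v (α x)) =
      ENNReal.ofReal (dyadicWeight n v (α₀ x)) ^ (1 - θ) *
        ENNReal.ofReal (dyadicWeight n v (α₁ x)) ^ θ := by
    rw [hα, dyadicWeight_convexComb, ENNReal.ofReal_mul (Real.rpow_nonneg (hW _).le _),
      ENNReal.ofReal_rpow_of_pos (hW _), ENNReal.ofReal_rpow_of_pos (hW _)]
  simp only [levelFun, ENNReal.ofReal_mul (hW _).le, hweight,
    ENNReal.mul_rpow_of_nonneg _ _ hθ0, ENNReal.mul_rpow_of_nonneg _ _ hθ1]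
  refine (mul_le_mul_right (h v _) _).trans_eq ?_
  ring

lemma ofReal_mul_seqNorm_le_calderonNorm {p₀ p₁ : En n → ℝ} {r : ℝ} (hθ : θ ∈ Ioo (0 : ℝ) 1)
    (hr : 0 < r) (hp : ∀ x, r ≤ p x) (hp₀ : ∀ x, 0 < p₀ x) (hp₁ : ∀ x, 0 < p₁ x)
    (hpθ : ∀ x, 1 / p x = (1 - θ) / p₀ x + θ / p₁ x) (hp₀m : Measurable p₀)
    (hα₀m : Measurable α₀) (hα : ∀ x, α x = (1 - θ) * α₀ x + θ * α₁ x)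
    (lam : ℕ → (Fin n → ℤ) → ℂ) :
    ENNReal.ofReal (2 ^ r⁻¹ * 2)⁻¹ * seqNorm α p p lam ≤
      calderonNorm (seqNorm α₀ p₀ p₀) (seqNorm α₁ p₁ p₁) θ lam := by
  have hconst : ENNReal.ofReal (2 ^ r⁻¹ * 2) = 2 ^ r⁻¹ * 2 := by
    rw [ENNReal.ofReal_mul (by positivity), ← ENNReal.ofReal_rpow_of_pos two_pos,
      ENNReal.ofReal_ofNat]
  refine le_of_forall_gt_imp_ge_of_dense fun M hM => ?_
  obtain ⟨M', ⟨μ, ν, hμ, hν, hlam⟩, hM'⟩ := sInf_lt_iff.1 hM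
  rw [ENNReal.ofReal_inv_of_pos (by positivity), mul_comm, ← div_eq_mul_inv, hconst]
  refine ENNReal.div_le_of_le_mul' ?_
  rw [seqNorm_eq_mixedNorm] at hμ hν ⊢
  rw [mul_assoc]
  refine mixedNorm_le_of_le_geomMean hθ hr hp hp₀ hp₁ hpθ hp₀m
    (fun v => (measurable_levelFun hα₀m μ v).ennreal_ofReal) (pos_of_gt hM').ne' hμ hν
    fun v x => (ofReal_levelFun_le_geomMean hθ hα hlam v x).trans ?_
  gcongr

lemma calderonNorm_le_ofReal {N₀ N₁ : (ℕ → (Fin n → ℤ) → ℂ) → ℝ≥0∞} {M : ℝ}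
    (hθ : θ ∈ Ioo (0 : ℝ) 1) (hM : 0 ≤ M) (hμ : N₀ μ ≤ 1) (hν : N₁ ν ≤ 1)
    (h : ∀ v m, ‖lam v m‖ ≤ M * (‖μ v m‖ ^ (1 - θ) * ‖ν v m‖ ^ θ)) :
    calderonNorm N₀ N₁ θ lam ≤ ENNReal.ofReal M := by
  refine sInf_le ⟨μ, ν, hμ, hν, fun v m => ?_⟩
  rw [mul_assoc, ENNReal.ofReal_rpow_of_nonneg (norm_nonneg _) (sub_nonneg.2 hθ.2.le),
    ENNReal.ofReal_rpow_of_nonneg (norm_nonneg _) hθ.1.le,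
    ← ENNReal.ofReal_mul (by positivity), ← ENNReal.ofReal_mul hM]
  exact ENNReal.ofReal_le_ofReal (h v m)

lemma seqModular_inv_smul_le_one {c : ℝ} (hp : ∀ x, 0 < p x) (hc : 0 < c)
    (h : seqNorm α p p lam < ENNReal.ofReal c) : seqModular α p (c⁻¹ • lam) ≤ 1 := by
  rw [seqNorm_eq_mixedNorm] at h
  simpa only [seqModular, levelFun_smul, abs_of_pos (inv_pos.2 hc), ← div_eq_inv_mul,
    ENNReal.ofReal_div_of_pos hc] using mixedModular_div_le_one_of_mixedNorm_lt hp h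

lemma seqNorm_inv_smul_le_one {r k : ℝ} (hr : 0 < r) (hp : ∀ x, r ≤ p x) (hk : 1 ≤ k)
    (h : seqModular α p lam ≤ ENNReal.ofReal (k ^ r)) : seqNorm α p p (k⁻¹ • lam) ≤ 1 := by
  have hk0 : 0 < k := zero_lt_one.trans_le hk
  have hkinv : ENNReal.ofReal k⁻¹ ≠ 0 := (ENNReal.ofReal_pos.2 (inv_pos.2 hk0)).ne'
  have hmod : mixedModular p (fun v x =>
      ENNReal.ofReal (levelFun α (k⁻¹ • lam) v x) / ENNReal.ofReal k⁻¹) ≤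
        ENNReal.ofReal (k ^ r) := by
    simpa only [seqModular, levelFun_smul, abs_of_pos (inv_pos.2 hk0), mul_comm k⁻¹,
      ENNReal.ofReal_mul (levelFun_nonneg _ _ _ _),
      ENNReal.mul_div_cancel_right hkinv ENNReal.ofReal_ne_top] using h
  rw [seqNorm_eq_mixedNorm]
  refine (mixedNorm_le_rpow_mul hr hp ?_ hkinv hmod).trans_eq ?_
  · exact ENNReal.one_le_ofReal.2 (Real.one_le_rpow hk hr.le)
  · rw [ENNReal.ofReal_rpow_of_pos (Real.rpow_pos_of_pos hk0 r), Real.rpow_rpow_inv hk0.le hr.ne',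
      ← ENNReal.ofReal_mul hk0.le, mul_inv_cancel₀ hk0.ne', ENNReal.ofReal_one]

end LevelFunctions

section Decay

variable {n : ℕ}

/-- A function of level and position that is summable over `ℕ` and `ℝ^n` but has
`-log(decay v x) ≤ (n + 1) * logWeight v x`. -/
def decay (v : ℕ) (x : En n) : ℝ := (2 ^ v)⁻¹ * (1 + ‖x‖) ^ (-(n + 1) : ℝ)

lemma decay_pos (v : ℕ) (x : En n) : 0 < decay v x := by
  unfold decay
  positivity

lemma decay_le_one (v : ℕ) (x : En n) : decay v x ≤ 1 :=
  mul_le_one₀ (inv_le_one_of_one_le₀ (one_le_pow₀ one_le_two)) (by positivity)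
    (Real.rpow_le_one_of_one_le_of_nonpos (le_add_of_nonneg_right (norm_nonneg x)) (by
      linarith [(n.cast_nonneg : (0 : ℝ) ≤ n)]))

lemma measurable_decay (v : ℕ) : Measurable (decay v : En n → ℝ) := by
  unfold decay
  fun_prop

lemma neg_log_decay_le (v : ℕ) (x : En n) : -Real.log (decay v x) ≤ (n + 1) * logWeight v x := by
  have hn : (0 : ℝ) ≤ n := n.cast_nonneg
  have hx : 0 < 1 + ‖x‖ := by positivity
  have hlog : Real.log (1 + ‖x‖) ≤ Real.log (Real.exp 1 + ‖x‖) := by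
    gcongr
    exact Real.one_le_exp zero_le_one
  have hlog2 : (v : ℝ) * Real.log 2 ≤ v :=
    mul_le_of_le_one_right v.cast_nonneg (by linarith [Real.log_two_lt_d9])
  calc -Real.log (decay v x) = v * Real.log 2 + (n + 1) * Real.log (1 + ‖x‖) := by
        rw [decay, Real.log_mul (by positivity) (by positivity), Real.log_inv, Real.log_pow,
          Real.log_rpow hx]
        ring
    _ ≤ v + (n + 1) * Real.log (Real.exp 1 + ‖x‖) := by gcongr
    _ ≤ (n + 1) * logWeight v x := by
        unfold logWeight
        nlinarith [(v.cast_nonneg : (0 : ℝ) ≤ v), mul_nonneg hn (v.cast_nonneg : (0 : ℝ) ≤ v)]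

lemma decay_basePoint_le (v : ℕ) (x : En n) :
    decay v (basePoint v x) ≤ (n + 1) ^ (n + 1 : ℝ) * decay v x := by
  have hn : (0 : ℝ) ≤ n := n.cast_nonneg
  set y := basePoint v x
  have hxy : 1 + ‖x‖ ≤ (n + 1) * (1 + ‖y‖) := by
    have htri : ‖x‖ ≤ ‖y‖ + ‖x - y‖ := norm_le_norm_add_norm_sub' x y
    nlinarith [norm_sub_basePoint_le_dim v x, mul_nonneg hn (norm_nonneg y)]
  have hpow : (n + 1 : ℝ) ^ (-(n + 1) : ℝ) * (1 + ‖y‖) ^ (-(n + 1) : ℝ) ≤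
      (1 + ‖x‖) ^ (-(n + 1) : ℝ) := by
    rw [← Real.mul_rpow (by positivity) (by positivity)]
    exact Real.rpow_le_rpow_of_nonpos (by positivity) hxy (by linarith)
  rw [Real.rpow_neg (by positivity : (0 : ℝ) ≤ n + 1), inv_mul_le_iff₀ (by positivity)] at hpow
  unfold decay
  rw [mul_left_comm]
  gcongr

lemma lintegral_tsum_decay_ne_top : ∫⁻ x : En n, ∑' v, ENNReal.ofReal (decay v x) ≠ ∞ := by
  have hsum : ∀ x : En n, ∑' v, ENNReal.ofReal (decay v x) =
      2 * ENNReal.ofReal ((1 + ‖x‖) ^ (-(n + 1) : ℝ)) := by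
    intro x
    have hgeom : HasSum (fun v : ℕ => ((2 : ℝ) ^ v)⁻¹) 2 := by
      simpa only [one_div, inv_pow] using hasSum_geometric_two
    have hdecay : HasSum (decay · x) (2 * (1 + ‖x‖) ^ (-(n + 1) : ℝ)) := hgeom.mul_right _
    rw [← ENNReal.ofReal_tsum_of_nonneg (fun v => (decay_pos v x).le) hdecay.summable,
      hdecay.tsum_eq, ENNReal.ofReal_mul zero_le_two, ENNReal.ofReal_ofNat]
  have hint : Integrable fun x : En n => (1 + ‖x‖) ^ (-(n + 1) : ℝ) :=
    integrable_one_add_norm (by simp)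
  simp only [hsum]
  rw [lintegral_const_mul' _ _ ENNReal.ofNat_ne_top]
  exact ENNReal.mul_ne_top ENNReal.ofNat_ne_top hint.lintegral_lt_top.ne

end Decay

section Factorization

variable {n : ℕ} {r b θ : ℝ} {α β p q : En n → ℝ} {lam : ℕ → (Fin n → ℤ) → ℂ}

/-- The size `2^{v(α(y)+n/2)} |λ_{v,m}|` of a coefficient, with `α` frozen at the corner `y` of
`Q_{v,m}`, raised to `decay v y ^ (1/r)` where it is smaller: this keeps its logarithm under
control and costs only an integrable error. -/
def truncHeight (r : ℝ) (α : En n → ℝ) (lam : ℕ → (Fin n → ℤ) → ℂ) (v : ℕ) (m : Fin n → ℤ) : ℝ :=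
  max (dyadicWeight n v (α (dyadicCorner v m)) * ‖lam v m‖) (decay v (dyadicCorner v m) ^ r⁻¹)

/-- The sequence in `f^{β(·)}_{q(·),q(·)}` serving as a factor of `λ ∈ f^{α(·)}_{p(·),p(·)}`:
the height raised to the power `p / q`, with all exponents frozen at the corner of the cube. -/
def factorSeq (r : ℝ) (α p β q : En n → ℝ) (lam : ℕ → (Fin n → ℤ) → ℂ) (v : ℕ)
    (m : Fin n → ℤ) : ℂ :=
  ((dyadicWeight n v (β (dyadicCorner v m)))⁻¹ *
    truncHeight r α lam v m ^ (p (dyadicCorner v m) / q (dyadicCorner v m)) : ℝ)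

lemma truncHeight_pos (r : ℝ) (α : En n → ℝ) (lam : ℕ → (Fin n → ℤ) → ℂ) (v : ℕ)
    (m : Fin n → ℤ) : 0 < truncHeight r α lam v m :=
  lt_max_of_lt_right (Real.rpow_pos_of_pos (decay_pos _ _) _)

lemma norm_factorSeq (r : ℝ) (α p β q : En n → ℝ) (lam : ℕ → (Fin n → ℤ) → ℂ) (v : ℕ)
    (m : Fin n → ℤ) :
    ‖factorSeq r α p β q lam v m‖ = (dyadicWeight n v (β (dyadicCorner v m)))⁻¹ *
      truncHeight r α lam v m ^ (p (dyadicCorner v m) / q (dyadicCorner v m)) :=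
  Complex.norm_of_nonneg (mul_nonneg (inv_nonneg.2 (dyadicWeight_pos _ _).le)
    (Real.rpow_nonneg (truncHeight_pos ..).le _))

lemma norm_le_geomMean_factorSeq {α₀ α₁ p₀ p₁ : En n → ℝ} (hp : ∀ x, 0 < p x)
    (hpθ : ∀ x, 1 / p x = (1 - θ) / p₀ x + θ / p₁ x)
    (hα : ∀ x, α x = (1 - θ) * α₀ x + θ * α₁ x) (v : ℕ) (m : Fin n → ℤ) :
    ‖lam v m‖ ≤ ‖factorSeq r α p α₀ p₀ lam v m‖ ^ (1 - θ) *
      ‖factorSeq r α p α₁ p₁ lam v m‖ ^ θ := by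
  set y := dyadicCorner v m
  set H := truncHeight r α lam v m
  have hH : 0 < H := truncHeight_pos ..
  have hW := fun s : ℝ => dyadicWeight_pos (n := n) v s
  have hexp : p y / p₀ y * (1 - θ) + p y / p₁ y * θ = 1 := by
    calc _ = p y * ((1 - θ) / p₀ y + θ / p₁ y) := by ring
      _ = 1 := by rw [← hpθ, mul_one_div_cancel (hp y).ne']
  have hfactor : ∀ (s t u : ℝ), ((dyadicWeight n v s)⁻¹ * H ^ t) ^ u =
      (dyadicWeight n v s ^ u)⁻¹ * H ^ (t * u) := fun s t u => by
    rw [Real.mul_rpow (inv_nonneg.2 (hW s).le) (Real.rpow_nonneg hH.le t),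
      Real.inv_rpow (hW s).le, ← Real.rpow_mul hH.le]
  calc ‖lam v m‖ ≤ (dyadicWeight n v (α y))⁻¹ * H := by
        rw [le_inv_mul_iff₀ (hW _)]
        exact le_max_left _ _
    _ = (dyadicWeight n v (α₀ y) ^ (1 - θ) * dyadicWeight n v (α₁ y) ^ θ)⁻¹ *
          H ^ (p y / p₀ y * (1 - θ) + p y / p₁ y * θ) := by
        rw [hexp, Real.rpow_one, hα, dyadicWeight_convexComb]
    _ = _ := by
        rw [norm_factorSeq, norm_factorSeq, hfactor, hfactor, Real.rpow_add hH]
        ring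

lemma frozenCoeff_le_levelFun {C : ℝ}
    (hα : ∀ v x, |α x - α (basePoint v x)| * (1 + v) ≤ C) (v : ℕ) (x : En n) :
    dyadicWeight n v (α (basePoint v x)) * ‖lam v (dyadicIndex v x)‖ ≤
      2 ^ C * levelFun α lam v x := by
  rw [levelFun, ← mul_assoc]
  gcongr
  exact dyadicWeight_le (abs_sub_comm (α x) _ ▸ hα v x)

lemma le_rpow_of_seqModular_le_one {a : ℝ} {v : ℕ} {m : Fin n → ℤ} (hr : 0 < r)
    (hp : ∀ x, r ≤ p x) (hlam : seqModular α p lam ≤ 1)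
    (ha : ∀ x, dyadicIndex v x = m → a ≤ levelFun α lam v x) : a ≤ 2 ^ (v * n / r : ℝ) := by
  rcases le_total a 1 with ha1 | ha1
  · exact ha1.trans (Real.one_le_rpow one_le_two (by positivity))
  have ha0 : 0 < a := zero_lt_one.trans_le ha1
  have hterm : ∀ x ∈ dyadicCube n v m,
      ENNReal.ofReal (a ^ r) ≤ ∑' w, ENNReal.ofReal (levelFun α lam w x) ^ p x := by
    intro x hx
    calc ENNReal.ofReal (a ^ r) ≤ ENNReal.ofReal (a ^ p x) :=
          ENNReal.ofReal_le_ofReal (Real.rpow_le_rpow_of_exponent_le ha1 (hp x))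
      _ = ENNReal.ofReal a ^ p x := (ENNReal.ofReal_rpow_of_pos ha0).symm
      _ ≤ ENNReal.ofReal (levelFun α lam v x) ^ p x :=
          ENNReal.rpow_le_rpow (ENNReal.ofReal_le_ofReal (ha x (mem_dyadicCube_iff.1 hx)))
            (hr.trans_le (hp x)).le
      _ ≤ _ := ENNReal.le_tsum v
  have hmass : ENNReal.ofReal (a ^ r * (2 ^ (v * n))⁻¹) ≤ 1 := by
    calc ENNReal.ofReal (a ^ r * (2 ^ (v * n))⁻¹)
        = ∫⁻ _ in dyadicCube n v m, ENNReal.ofReal (a ^ r) := by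
          rw [setLIntegral_const, volume_dyadicCube, ENNReal.ofReal_mul (by positivity)]
      _ ≤ ∫⁻ x in dyadicCube n v m, ∑' w, ENNReal.ofReal (levelFun α lam w x) ^ p x :=
          setLIntegral_mono' (measurableSet_dyadicCube v m) hterm
      _ ≤ seqModular α p lam := setLIntegral_le_lintegral _ _
      _ ≤ 1 := hlam
  rw [ENNReal.ofReal_le_one, mul_inv_le_iff₀ (by positivity), one_mul] at hmass
  calc a = (a ^ r) ^ r⁻¹ := (Real.rpow_rpow_inv ha0.le hr.ne').symm
    _ ≤ ((2 : ℝ) ^ (v * n)) ^ r⁻¹ := by gcongr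
    _ = 2 ^ (v * n / r : ℝ) := by
        rw [← Real.rpow_natCast, ← Real.rpow_mul two_pos.le, Nat.cast_mul, div_eq_mul_inv]

lemma truncHeight_le_of_seqModular_le_one {C : ℝ} (hr : 0 < r) (hC : 0 ≤ C)
    (hα : ∀ v x, |α x - α (basePoint v x)| * (1 + v) ≤ C) (hp : ∀ x, r ≤ p x)
    (hlam : seqModular α p lam ≤ 1) (v : ℕ) (m : Fin n → ℤ) :
    truncHeight r α lam v m ≤ 2 ^ (C + v * n / r) := by
  refine max_le ?_ ?_
  · rw [Real.rpow_add two_pos, ← inv_mul_le_iff₀ (by positivity)]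
    refine le_rpow_of_seqModular_le_one (m := m) hr hp hlam fun x hx => ?_
    rw [inv_mul_le_iff₀ (by positivity), ← hx]
    exact frozenCoeff_le_levelFun hα v x
  · exact (Real.rpow_le_one (decay_pos _ _).le (decay_le_one _ _) (inv_nonneg.2 hr.le)).trans
      (Real.one_le_rpow one_le_two (by positivity))

lemma exists_abs_log_truncHeight_le (hr : 0 < r) (hα : BoundedCellOsc (fun v _ => 1 + v) α)
    (hp : ∀ x, r ≤ p x) :
    ∃ K : ℝ, 0 ≤ K ∧ ∀ lam, seqModular α p lam ≤ 1 → ∀ v x,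
      |Real.log (truncHeight r α lam v (dyadicIndex v x))| ≤ K * logWeight v x := by
  obtain ⟨C, hC, hosc⟩ := hα
  refine ⟨C + n / r + (n + 1) * (1 + n) / r, by positivity, fun lam hlam v x => ?_⟩
  set H := truncHeight r α lam v (dyadicIndex v x)
  have hW := logWeight_nonneg v x
  have hvW := one_add_le_logWeight v x
  have hupper : Real.log H ≤ (C + n / r) * logWeight v x := by
    calc Real.log H ≤ Real.log (2 ^ (C + v * n / r)) :=
          Real.log_le_log (truncHeight_pos ..)
            (truncHeight_le_of_seqModular_le_one hr hC hosc hp hlam v _)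
      _ = (C + v * n / r) * Real.log 2 := Real.log_rpow two_pos _
      _ ≤ C + v * n / r :=
          mul_le_of_le_one_right (by positivity) (by linarith [Real.log_two_lt_d9])
      _ ≤ (C + n / r) * (1 + v) := by
          rw [mul_div_assoc]
          nlinarith [mul_nonneg hC v.cast_nonneg, (by positivity : 0 ≤ n / r)]
      _ ≤ (C + n / r) * logWeight v x := by gcongr
  have hlower : -Real.log H ≤ (n + 1) * (1 + n) / r * logWeight v x := by
    set y := basePoint v x
    calc -Real.log H ≤ -Real.log (decay v y ^ r⁻¹) :=
          neg_le_neg (Real.log_le_log (Real.rpow_pos_of_pos (decay_pos _ _) _) (le_max_right _ _))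
      _ = r⁻¹ * -Real.log (decay v y) := by rw [Real.log_rpow (decay_pos _ _), mul_neg]
      _ ≤ r⁻¹ * ((n + 1) * ((1 + n) * logWeight v x)) := by
          gcongr
          refine (neg_log_decay_le v y).trans ?_
          gcongr
          exact logWeight_le_of_norm_sub_le (norm_sub_basePoint_le_dim v x)
      _ = (n + 1) * (1 + n) / r * logWeight v x := by ring
  rw [add_mul]
  refine abs_le'.2 ⟨hupper.trans (le_add_of_nonneg_right ?_),
    hlower.trans (le_add_of_nonneg_left ?_)⟩ <;> positivity

lemma rpow_le_exp_mul_rpow {T s t K W C : ℝ} (hT : 0 < T) (hK : 0 ≤ K)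
    (hlog : |Real.log T| ≤ K * W) (hst : |s - t| * W ≤ C) : T ^ s ≤ Real.exp (K * C) * T ^ t := by
  have hexp : T ^ (s - t) ≤ Real.exp (K * C) := by
    rw [Real.rpow_def_of_pos hT]
    refine Real.exp_le_exp.2 ?_
    calc Real.log T * (s - t) ≤ |Real.log T| * |s - t| := by
          rw [← abs_mul]
          exact le_abs_self _
      _ ≤ K * W * |s - t| := by gcongr
      _ = K * (|s - t| * W) := by ring
      _ ≤ K * C := by gcongr
  calc T ^ s = T ^ (s - t) * T ^ t := by rw [← Real.rpow_add hT, sub_add_cancel]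
    _ ≤ Real.exp (K * C) * T ^ t := by gcongr

lemma abs_div_mul_sub_mul_le {s s' t t' W Cs Ct : ℝ} (hr : 0 < r) (hW : 0 ≤ W)
    (hs' : s' ∈ Icc r b) (ht' : r ≤ t') (hs : |s - s'| * W ≤ Cs) (ht : |t - t'| * W ≤ Ct) :
    |s' / t' * t - s| * W ≤ b / r * Ct + Cs := by
  have ht0 : 0 < t' := hr.trans_le ht'
  have hs0 : 0 ≤ s' := hr.le.trans hs'.1
  have hratio : s' / t' ≤ b / r := div_le_div₀ (hs0.trans hs'.2) hs'.2 hr ht'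
  have hbr : 0 ≤ b / r := div_nonneg (hs0.trans hs'.2) hr.le
  calc |s' / t' * t - s| * W = |s' / t' * (t - t') + (s' - s)| * W := by
        congr 2
        field_simp
        ring
    _ ≤ (s' / t' * |t - t'| + |s - s'|) * W := by
        gcongr
        refine (abs_add_le _ _).trans_eq ?_
        rw [abs_mul, abs_of_nonneg (by positivity : 0 ≤ s' / t'), abs_sub_comm s' s]
    _ = s' / t' * (|t - t'| * W) + |s - s'| * W := by ring
    _ ≤ b / r * Ct + Cs := by gcongr

lemma exists_truncHeight_rpow_le (hr : 0 < r) (hα : BoundedCellOsc (fun v _ => 1 + v) α)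
    (hp : ∀ x, p x ∈ Icc r b) :
    ∃ A : ℝ, 0 ≤ A ∧ ∀ lam v x, truncHeight r α lam v (dyadicIndex v x) ^ p x ≤
      A * (levelFun α lam v x ^ p x + decay v x) := by
  obtain ⟨C, hC, hosc⟩ := hα
  refine ⟨2 ^ (C * b) + (n + 1) ^ (n + 1 : ℝ), by positivity, fun lam v x => ?_⟩
  set y := basePoint v x
  set a := dyadicWeight n v (α y) * ‖lam v (dyadicIndex v x)‖
  have hp0 : 0 < p x := hr.trans_le (hp x).1
  have ha : 0 ≤ a := mul_nonneg (dyadicWeight_pos _ _).le (norm_nonneg _)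
  have hl : 0 ≤ levelFun α lam v x := levelFun_nonneg ..
  have hd : 0 ≤ decay v x := (decay_pos v x).le
  have hy : 0 < decay v y := decay_pos v y
  have hcoeff : a ^ p x ≤ 2 ^ (C * b) * levelFun α lam v x ^ p x := by
    calc a ^ p x ≤ (2 ^ C * levelFun α lam v x) ^ p x :=
          Real.rpow_le_rpow ha (frozenCoeff_le_levelFun hosc v x) hp0.le
      _ = 2 ^ (C * p x) * levelFun α lam v x ^ p x := by
          rw [Real.mul_rpow (by positivity) hl, Real.rpow_mul two_pos.le]
      _ ≤ 2 ^ (C * b) * levelFun α lam v x ^ p x := by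
          gcongr
          · exact one_le_two
          · exact (hp x).2
  have hfloor : (decay v y ^ r⁻¹) ^ p x ≤ (n + 1) ^ (n + 1 : ℝ) * decay v x := by
    calc (decay v y ^ r⁻¹) ^ p x = decay v y ^ (p x / r) := by
          rw [← Real.rpow_mul hy.le, div_eq_inv_mul]
      _ ≤ decay v y ^ (1 : ℝ) := Real.rpow_le_rpow_of_exponent_ge hy (decay_le_one v y)
          ((one_le_div hr).2 (hp x).1)
      _ ≤ (n + 1) ^ (n + 1 : ℝ) * decay v x := (Real.rpow_one _).trans_le (decay_basePoint_le v x)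
  calc truncHeight r α lam v (dyadicIndex v x) ^ p x
      = max (a ^ p x) ((decay v y ^ r⁻¹) ^ p x) :=
        (Real.monotoneOn_rpow_Ici_of_exponent_nonneg hp0.le).map_max ha (Real.rpow_nonneg hy.le _)
    _ ≤ 2 ^ (C * b) * levelFun α lam v x ^ p x + (n + 1) ^ (n + 1 : ℝ) * decay v x :=
        (max_le_add_of_nonneg (by positivity) (by positivity)).trans (add_le_add hcoeff hfloor)
    _ ≤ _ := by
        rw [add_mul, mul_add, mul_add]
        gcongr
        · exact le_add_of_nonneg_right (by positivity)
        · exact le_add_of_nonneg_left (by positivity)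

lemma exists_levelFun_factorSeq_rpow_le (hr : 0 < r)
    (hα : BoundedCellOsc (fun v _ => 1 + v) α) (hβ : BoundedCellOsc (fun v _ => 1 + v) β)
    (hp : ∀ x, p x ∈ Icc r b) (hq : ∀ x, q x ∈ Icc r b)
    (hposc : BoundedCellOsc logWeight p) (hqosc : BoundedCellOsc logWeight q) :
    ∃ A : ℝ, 0 ≤ A ∧ ∀ lam, seqModular α p lam ≤ 1 → ∀ v x,
      levelFun β (factorSeq r α p β q lam) v x ^ q x ≤
        A * (levelFun α lam v x ^ p x + decay v x) := by
  obtain ⟨K, hK, hlog⟩ := exists_abs_log_truncHeight_le hr hα fun x => (hp x).1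
  obtain ⟨A, hA, hheight⟩ := exists_truncHeight_rpow_le hr hα hp
  obtain ⟨Cβ, hCβ, hβ⟩ := hβ
  obtain ⟨Cp, -, hposc⟩ := hposc
  obtain ⟨Cq, -, hqosc⟩ := hqosc
  refine ⟨2 ^ (Cβ * b) * (Real.exp (K * (b / r * Cq + Cp)) * A), by positivity,
    fun lam hlam v x => ?_⟩
  set y := basePoint v x
  set H := truncHeight r α lam v (dyadicIndex v x)
  have hH : 0 < H := truncHeight_pos ..
  have hq0 : 0 < q x := hr.trans_le (hq x).1
  have hWy : 0 < dyadicWeight n v (β y) := dyadicWeight_pos _ _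
  have hlevel : levelFun β (factorSeq r α p β q lam) v x ≤ 2 ^ Cβ * H ^ (p y / q y) := by
    rw [levelFun, norm_factorSeq, ← mul_assoc, ← div_eq_mul_inv]
    gcongr
    exact (div_le_iff₀ hWy).2 (dyadicWeight_le (hβ v x))
  calc levelFun β (factorSeq r α p β q lam) v x ^ q x
      ≤ (2 ^ Cβ * H ^ (p y / q y)) ^ q x :=
        Real.rpow_le_rpow (levelFun_nonneg ..) hlevel hq0.le
    _ = 2 ^ (Cβ * q x) * H ^ (p y / q y * q x) := by
        rw [Real.mul_rpow (by positivity) (by positivity), Real.rpow_mul two_pos.le,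
          Real.rpow_mul hH.le]
    _ ≤ 2 ^ (Cβ * b) * (Real.exp (K * (b / r * Cq + Cp)) * H ^ p x) := by
        gcongr
        · exact one_le_two
        · exact (hq x).2
        · exact rpow_le_exp_mul_rpow hH hK (hlog lam hlam v x) (abs_div_mul_sub_mul_le hr
            (logWeight_nonneg v x) (hp y) (hq y).1 (hposc v x) (hqosc v x))
    _ ≤ 2 ^ (Cβ * b) * (Real.exp (K * (b / r * Cq + Cp)) *
          (A * (levelFun α lam v x ^ p x + decay v x))) := by
        gcongr
        exact hheight lam v x
    _ = _ := by ring

lemma exists_seqModular_factorSeq_le (hr : 0 < r)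
    (hα : BoundedCellOsc (fun v _ => 1 + v) α) (hβ : BoundedCellOsc (fun v _ => 1 + v) β)
    (hp : ∀ x, p x ∈ Icc r b) (hq : ∀ x, q x ∈ Icc r b)
    (hposc : BoundedCellOsc logWeight p) (hqosc : BoundedCellOsc logWeight q) :
    ∃ K : ℝ≥0∞, K ≠ ∞ ∧ ∀ lam, seqModular α p lam ≤ 1 →
      seqModular β q (factorSeq r α p β q lam) ≤ K := by
  obtain ⟨A, hA, hpoint⟩ := exists_levelFun_factorSeq_rpow_le hr hα hβ hp hq hposc hqosc
  refine ⟨ENNReal.ofReal A * (1 + ∫⁻ x : En n, ∑' v, ENNReal.ofReal (decay v x)),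
    ENNReal.mul_ne_top ENNReal.ofReal_ne_top
      (ENNReal.add_ne_top.2 ⟨ENNReal.one_ne_top, lintegral_tsum_decay_ne_top⟩),
    fun lam hlam => ?_⟩
  have hterm : ∀ v x, ENNReal.ofReal (levelFun β (factorSeq r α p β q lam) v x) ^ q x ≤
      ENNReal.ofReal A *
        (ENNReal.ofReal (levelFun α lam v x) ^ p x + ENNReal.ofReal (decay v x)) := by
    intro v x
    have hl : 0 ≤ levelFun α lam v x := levelFun_nonneg ..
    rw [ENNReal.ofReal_rpow_of_nonneg (levelFun_nonneg ..) (hr.le.trans (hq x).1),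
      ENNReal.ofReal_rpow_of_nonneg hl (hr.le.trans (hp x).1),
      ← ENNReal.ofReal_add (Real.rpow_nonneg hl _) (decay_pos v x).le, ← ENNReal.ofReal_mul hA]
    exact ENNReal.ofReal_le_ofReal (hpoint lam hlam v x)
  calc seqModular β q (factorSeq r α p β q lam)
      ≤ ∫⁻ x, ENNReal.ofReal A * (∑' v, ENNReal.ofReal (levelFun α lam v x) ^ p x +
          ∑' v, ENNReal.ofReal (decay v x)) := by
        refine lintegral_mono fun x => ?_
        rw [← ENNReal.tsum_add, ← ENNReal.tsum_mul_left]
        exact ENNReal.tsum_le_tsum fun v => hterm v x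
    _ = ENNReal.ofReal A *
          (seqModular α p lam + ∫⁻ x, ∑' v, ENNReal.ofReal (decay v x)) := by
        rw [lintegral_const_mul' _ _ ENNReal.ofReal_ne_top, lintegral_add_right _
          (Measurable.tsum fun v => (measurable_decay v).ennreal_ofReal)]
        rfl
    _ ≤ _ := by gcongr

lemma exists_seqNorm_inv_smul_factorSeq_le_one (hr : 0 < r)
    (hα : BoundedCellOsc (fun v _ => 1 + v) α) (hβ : BoundedCellOsc (fun v _ => 1 + v) β)
    (hp : ∀ x, p x ∈ Icc r b) (hq : ∀ x, q x ∈ Icc r b)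
    (hposc : BoundedCellOsc logWeight p) (hqosc : BoundedCellOsc logWeight q) :
    ∃ k₀ : ℝ, 1 ≤ k₀ ∧ ∀ k ≥ k₀, ∀ lam, seqModular α p lam ≤ 1 →
      seqNorm β q q (k⁻¹ • factorSeq r α p β q lam) ≤ 1 := by
  obtain ⟨K, hK, hmod⟩ := exists_seqModular_factorSeq_le hr hα hβ hp hq hposc hqosc
  refine ⟨max 1 (K.toReal ^ r⁻¹), le_max_left _ _, fun k hk lam hlam => ?_⟩
  obtain ⟨hk1, hkK⟩ := max_le_iff.1 hk
  refine seqNorm_inv_smul_le_one hr (fun x => (hq x).1) hk1 ((hmod lam hlam).trans ?_)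
  rw [ENNReal.le_ofReal_iff_toReal_le hK (Real.rpow_nonneg (zero_le_one.trans hk1) r)]
  calc K.toReal = (K.toReal ^ r⁻¹) ^ r := (Real.rpow_inv_rpow ENNReal.toReal_nonneg hr.ne').symm
    _ ≤ k ^ r := by gcongr

lemma calderonNorm_le_of_factorSeq {α₀ α₁ p₀ p₁ : En n → ℝ} {c k : ℝ} (hθ : θ ∈ Ioo (0 : ℝ) 1)
    (hp : ∀ x, 0 < p x) (hpθ : ∀ x, 1 / p x = (1 - θ) / p₀ x + θ / p₁ x)
    (hα : ∀ x, α x = (1 - θ) * α₀ x + θ * α₁ x) (hc : 0 < c) (hk : 0 < k)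
    (h₀ : seqNorm α₀ p₀ p₀ (k⁻¹ • factorSeq r α p α₀ p₀ (c⁻¹ • lam)) ≤ 1)
    (h₁ : seqNorm α₁ p₁ p₁ (k⁻¹ • factorSeq r α p α₁ p₁ (c⁻¹ • lam)) ≤ 1) :
    calderonNorm (seqNorm α₀ p₀ p₀) (seqNorm α₁ p₁ p₁) θ lam ≤ ENNReal.ofReal (k * c) := by
  refine calderonNorm_le_ofReal hθ (by positivity) h₀ h₁ fun v m => ?_
  set f₀ := ‖factorSeq r α p α₀ p₀ (c⁻¹ • lam) v m‖
  set f₁ := ‖factorSeq r α p α₁ p₁ (c⁻¹ • lam) v m‖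
  have hk' : 0 ≤ k⁻¹ := (inv_pos.2 hk).le
  have hfactor : c⁻¹ * ‖lam v m‖ ≤ f₀ ^ (1 - θ) * f₁ ^ θ := by
    simpa only [Pi.smul_apply, norm_smul, Real.norm_of_nonneg (inv_pos.2 hc).le] using
      norm_le_geomMean_factorSeq (lam := c⁻¹ • lam) hp hpθ hα v m
  have hkpow : k⁻¹ ^ (1 - θ) * k⁻¹ ^ θ = k⁻¹ := by
    rw [← Real.rpow_add (inv_pos.2 hk), sub_add_cancel, Real.rpow_one]
  simp only [Pi.smul_apply, norm_smul, Real.norm_of_nonneg hk']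
  calc ‖lam v m‖ ≤ c * (f₀ ^ (1 - θ) * f₁ ^ θ) := (inv_mul_le_iff₀ hc).1 hfactor
    _ = k * c * (k⁻¹ ^ (1 - θ) * k⁻¹ ^ θ * (f₀ ^ (1 - θ) * f₁ ^ θ)) := by
        rw [hkpow]
        field_simp
    _ = k * c * ((k⁻¹ * f₀) ^ (1 - θ) * (k⁻¹ * f₁) ^ θ) := by
        rw [Real.mul_rpow hk' (norm_nonneg _), Real.mul_rpow hk' (norm_nonneg _)]
        ring

lemma exists_calderonNorm_le_ofReal_mul_seqNorm {α₀ α₁ p₀ p₁ : En n → ℝ}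
    (hθ : θ ∈ Ioo (0 : ℝ) 1) (hr : 0 < r)
    (hα₀ : BoundedCellOsc (fun v _ => 1 + v) α₀) (hα₁ : BoundedCellOsc (fun v _ => 1 + v) α₁)
    (hp₀ : ∀ x, p₀ x ∈ Icc r b) (hp₁ : ∀ x, p₁ x ∈ Icc r b)
    (hp₀osc : BoundedCellOsc logWeight p₀) (hp₁osc : BoundedCellOsc logWeight p₁)
    (hpθ : ∀ x, 1 / p x = (1 - θ) / p₀ x + θ / p₁ x)
    (hα : ∀ x, α x = (1 - θ) * α₀ x + θ * α₁ x) :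
    ∃ k : ℝ, 0 < k ∧ ∀ lam, calderonNorm (seqNorm α₀ p₀ p₀) (seqNorm α₁ p₁ p₁) θ lam ≤
      ENNReal.ofReal k * seqNorm α p p lam := by
  have hp : ∀ x, p x ∈ Icc r b := fun x => mem_Icc_of_one_div_eq hθ hr (hp₀ x) (hp₁ x) (hpθ x)
  have hpos : ∀ x, 0 < p x := fun x => hr.trans_le (hp x).1
  have hposc := hp₀osc.of_one_div_eq hθ logWeight_nonneg hp₁osc hr hp₀ hp₁ hpθ
  have hαosc := hα₀.convexComb hθ (fun v _ => by positivity) hα₁ hα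
  obtain ⟨k₀, hk₀, hnorm₀⟩ :=
    exists_seqNorm_inv_smul_factorSeq_le_one hr hαosc hα₀ hp hp₀ hposc hp₀osc
  obtain ⟨k₁, -, hnorm₁⟩ :=
    exists_seqNorm_inv_smul_factorSeq_le_one hr hαosc hα₁ hp hp₁ hposc hp₁osc
  set k := max k₀ k₁
  have hk : 0 < k := zero_lt_one.trans_le (hk₀.trans (le_max_left _ _))
  refine ⟨k, hk, fun lam => ?_⟩
  rw [← ENNReal.div_le_iff' (ENNReal.ofReal_pos.2 hk).ne' ENNReal.ofReal_ne_top]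
  refine le_of_forall_gt_imp_ge_of_dense fun d hd => ENNReal.div_le_of_le_mul' ?_
  rcases eq_or_ne d ∞ with rfl | hd_top
  · simp [ENNReal.mul_top, hk]
  obtain ⟨c, hc, rfl⟩ : ∃ c, 0 < c ∧ ENNReal.ofReal c = d :=
    ⟨d.toReal, ENNReal.toReal_pos (pos_of_gt hd).ne' hd_top, ENNReal.ofReal_toReal hd_top⟩
  have hmod := seqModular_inv_smul_le_one hpos hc hd
  rw [← ENNReal.ofReal_mul hk.le]
  exact calderonNorm_le_of_factorSeq hθ hpos hpθ hα hc hk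
    (hnorm₀ k (le_max_left _ _) _ hmod) (hnorm₁ k (le_max_right _ _) _ hmod)

end Factorization

theorem stmt8_general {n : ℕ} (θ : ℝ) (hθ : θ ∈ Set.Ioo (0 : ℝ) 1)
    (p₀ p₁ α₀ α₁ p α : En n → ℝ)
    (hp₀ : ∃ c, GlobLogHolder c p₀) (hp₁ : ∃ c, GlobLogHolder c p₁)
    (hp₀b : ∃ r b : ℝ, 0 < r ∧ ∀ x, p₀ x ∈ Icc r b)
    (hp₁b : ∃ r b : ℝ, 0 < r ∧ ∀ x, p₁ x ∈ Icc r b)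
    (hα₀ : ∃ c, LocLogHolder c α₀) (hα₁ : ∃ c, LocLogHolder c α₁)
    (hp : ∀ x, 1 / p x = (1 - θ) / p₀ x + θ / p₁ x)
    (hα : ∀ x, α x = (1 - θ) * α₀ x + θ * α₁ x) :
    ∃ c₁ c₂ : ℝ, 0 < c₁ ∧ 0 < c₂ ∧ ∀ lam : ℕ → (Fin n → ℤ) → ℂ,
      ENNReal.ofReal c₁ * seqNorm α p p lam ≤
          calderonNorm (seqNorm α₀ p₀ p₀) (seqNorm α₁ p₁ p₁) θ lam ∧
        calderonNorm (seqNorm α₀ p₀ p₀) (seqNorm α₁ p₁ p₁) θ lam ≤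
          ENNReal.ofReal c₂ * seqNorm α p p lam := by
  obtain ⟨_, hp₀⟩ := hp₀
  obtain ⟨_, hp₁⟩ := hp₁
  obtain ⟨_, hα₀⟩ := hα₀
  obtain ⟨_, hα₁⟩ := hα₁
  obtain ⟨r₀, b₀, hr₀, hp₀b⟩ := hp₀b
  obtain ⟨r₁, b₁, hr₁, hp₁b⟩ := hp₁b
  have hr : 0 < min r₀ r₁ := lt_min hr₀ hr₁
  have hmem₀ : ∀ x, p₀ x ∈ Icc (min r₀ r₁) (max b₀ b₁) := fun x =>
    Icc_subset_Icc (min_le_left _ _) (le_max_left _ _) (hp₀b x)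
  have hmem₁ : ∀ x, p₁ x ∈ Icc (min r₀ r₁) (max b₀ b₁) := fun x =>
    Icc_subset_Icc (min_le_right _ _) (le_max_right _ _) (hp₁b x)
  obtain ⟨c₂, hc₂, hupper⟩ := exists_calderonNorm_le_ofReal_mul_seqNorm hθ hr
    hα₀.boundedCellOsc hα₁.boundedCellOsc hmem₀ hmem₁ hp₀.boundedCellOsc hp₁.boundedCellOsc hp hα
  refine ⟨(2 ^ (min r₀ r₁)⁻¹ * 2)⁻¹, c₂, by positivity, hc₂, fun lam => ⟨?_, hupper lam⟩⟩
  exact ofReal_mul_seqNorm_le_calderonNorm hθ hr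
    (fun x => (mem_Icc_of_one_div_eq hθ hr (hmem₀ x) (hmem₁ x) (hp x)).1)
    (fun x => hr₀.trans_le (hp₀b x).1) (fun x => hr₁.trans_le (hp₁b x).1) hp
    hp₀.1.continuous.measurable hα₀.continuous.measurable hα lam

/-- Theorem `calderon-prod1`: the Calderón product
`(f^{α₀(·)}_{p₀(·),p₀(·)})^{1−θ}·(f^{α₁(·)}_{p₁(·),p₁(·)})^θ = f^{α(·)}_{p(·),p(·)}`
with equivalent norms. -/
theorem stmt8 {n : ℕ} (θ : ℝ) (hθ : θ ∈ Set.Ioo (0 : ℝ) 1)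
    (p₀ p₁ α₀ α₁ p α : En n → ℝ)
    (hp₀ : ∃ c, GlobLogHolder c p₀) (hp₁ : ∃ c, GlobLogHolder c p₁)
    (hp₀b : ∃ b : ℝ, ∀ x, 1 ≤ p₀ x ∧ p₀ x ≤ b)
    (hp₁b : ∃ b : ℝ, ∀ x, 1 ≤ p₁ x ∧ p₁ x ≤ b)
    (hα₀ : ∃ c, LocLogHolder c α₀) (hα₁ : ∃ c, LocLogHolder c α₁)
    (hp : ∀ x, 1 / p x = (1 - θ) / p₀ x + θ / p₁ x)
    (hα : ∀ x, α x = (1 - θ) * α₀ x + θ * α₁ x) :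
    ∃ c₁ c₂ : ℝ, 0 < c₁ ∧ 0 < c₂ ∧ ∀ lam : ℕ → (Fin n → ℤ) → ℂ,
      ENNReal.ofReal c₁ * seqNorm α p p lam ≤
          calderonNorm (seqNorm α₀ p₀ p₀) (seqNorm α₁ p₁ p₁) θ lam ∧
        calderonNorm (seqNorm α₀ p₀ p₀) (seqNorm α₁ p₁ p₁) θ lam ≤
          ENNReal.ofReal c₂ * seqNorm α p p lam := by
  obtain ⟨b₀, hp₀b⟩ := hp₀b
  obtain ⟨b₁, hp₁b⟩ := hp₁b
  exact stmt8_general θ hθ p₀ p₁ α₀ α₁ p α hp₀ hp₁ ⟨1, b₀, one_pos, hp₀b⟩ ⟨1, b₁, one_pos, hp₁b⟩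
    hα₀ hα₁ hp hα
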